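/- Let K be a finite field, let β ∈ K with β ≠ 0, and let r : ℕ with r ≥ 1. Then the set {α ∈ K | (α + β)^r = α^r ∨ (α * (α + β))^(r + 1) = 1} has cardinality at most 3 * r + 2. Consequently, for α chosen uniformly at random in K, the probability that ((α + β)^r − α^r) * ((α * (α + β))^(r + 1) − 1) = 0 is at most (3 * r + 2) / (Fintype.card K). (This is the root-counting core of the paper's proof that the Barnum et al. purity testing codes are pairwise-detectable: the stabilizer groups S_α and S_{α+β} can share an undetectable element only when α is a root of this low-degree polynomial.) -/

import Mathlib

/-!
Each of the two equations in `α` is polynomial, so its solutions are counted by a degree. In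
`(X + β) ^ r - X ^ r` the leading terms cancel, which leaves degree less than `r`, and the
polynomial is nonzero because it takes the value `β ^ r` at `0`. The polynomial
`(X * (X + β)) ^ (r + 1) - 1` has degree `2 * (r + 1)`.
-/

section IsDomain

open Polynomial

variable {R : Type*} [CommRing R] [IsDomain R]

theorem encard_setOf_eval_eq_eval_le {p q : R[X]} (h : p ≠ q) :
    {x | p.eval x = q.eval x}.encard ≤ (p - q).natDegree := by
  have eq_rootSet : {x | p.eval x = q.eval x} = (p - q).rootSet R := by
    ext x
    simp [mem_rootSet, sub_ne_zero.mpr h, sub_eq_zero]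
  rw [eq_rootSet, ← (rootSet_finite (p - q) R).cast_ncard_eq]
  exact_mod_cast ncard_rootSet_le (p - q) R

theorem encard_setOf_add_pow_eq_pow_lt {β : R} (hβ : β ≠ 0) {r : ℕ} (hr : r ≠ 0) :
    {α : R | (α + β) ^ r = α ^ r}.encard < r := by
  have shifted_ne : (X + C β) ^ r ≠ (X : R[X]) ^ r := fun h => by
    simpa [hr, hβ] using congrArg (eval 0) h
  have natDegree_lt : ((X + C β) ^ r - X ^ r : R[X]).natDegree < r := by
    have leading_terms_cancel := degree_sub_lt_left (p := (X + C β) ^ r) (q := (X : R[X]) ^ r)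
      (by simp) (pow_ne_zero r (X_add_C_ne_zero β)) (by simp)
    simpa using natDegree_lt_natDegree (sub_ne_zero.mpr shifted_ne) leading_terms_cancel
  calc {α : R | (α + β) ^ r = α ^ r}.encard
      ≤ ((X + C β) ^ r - X ^ r : R[X]).natDegree := by
        simpa using encard_setOf_eval_eq_eval_le shifted_ne
    _ < r := by exact_mod_cast natDegree_lt

theorem encard_setOf_mul_add_pow_eq_le (β c : R) {n : ℕ} (hn : n ≠ 0) :
    {α : R | (α * (α + β)) ^ n = c}.encard ≤ 2 * n := by
  have natDegree_eq : ((X * (X + C β)) ^ n : R[X]).natDegree = 2 * n := by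
    rw [natDegree_pow, natDegree_X_mul (X_add_C_ne_zero β), natDegree_X_add_C, mul_comm]
  have ne_const : (X * (X + C β)) ^ n ≠ C c := fun h => by
    have := natDegree_eq.symm.trans (h ▸ natDegree_C c)
    omega
  simpa [natDegree_eq] using encard_setOf_eval_eq_eval_le ne_const

theorem pairwise_detectability_root_count_general {β : R} (hβ : β ≠ 0) {r : ℕ} (hr : r ≠ 0) :
    {α : R | (α + β) ^ r = α ^ r ∨ (α * (α + β)) ^ (r + 1) = 1}.encard < 3 * r + 2 := by
  have mul_pow_encard_le := encard_setOf_mul_add_pow_eq_le β 1 r.succ_ne_zero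
  have mul_pow_encard_ne_top : {α : R | (α * (α + β)) ^ (r + 1) = 1}.encard ≠ ⊤ :=
    ne_top_of_le_ne_top (ENat.natCast_ne_top (2 * (r + 1))) (by exact_mod_cast mul_pow_encard_le)
  calc {α : R | (α + β) ^ r = α ^ r ∨ (α * (α + β)) ^ (r + 1) = 1}.encard
      ≤ {α : R | (α + β) ^ r = α ^ r}.encard
          + {α : R | (α * (α + β)) ^ (r + 1) = 1}.encard := Set.encard_union_le _ _
    _ < r + 2 * (r + 1 : ℕ) :=
        ENat.add_lt_add_of_lt_of_le mul_pow_encard_ne_top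
          (encard_setOf_add_pow_eq_pow_lt hβ hr) mul_pow_encard_le
    _ = 3 * r + 2 := by
        push_cast
        ring

end IsDomain

/-- Root-counting core of the pairwise-detectability of the Barnum et al. purity testing
codes: for a nonzero shift `β`, at most `3r + 2` elements `α` of a finite field satisfy
`(α + β)^r = α^r` or `(α(α + β))^(r+1) = 1`; hence the probability that a uniformly random
`α` is a root of `((α + β)^r − α^r)·((α(α + β))^(r+1) − 1)` is at most `(3r + 2)/|K|`. -/
theorem pairwise_detectability_root_count
    {K : Type*} [Field K] [Fintype K] (β : K) (hβ : β ≠ 0) (r : ℕ) (hr : 1 ≤ r) :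
    {α : K | (α + β) ^ r = α ^ r ∨ (α * (α + β)) ^ (r + 1) = 1}.ncard ≤ 3 * r + 2 ∧
    ({α : K | ((α + β) ^ r - α ^ r) * ((α * (α + β)) ^ (r + 1) - 1) = 0}.ncard : ℝ)
        / (Fintype.card K : ℝ) ≤ ((3 * r + 2 : ℕ) : ℝ) / (Fintype.card K : ℝ) := by
  have root_count :
      {α : K | (α + β) ^ r = α ^ r ∨ (α * (α + β)) ^ (r + 1) = 1}.ncard ≤ 3 * r + 2 :=
    ENat.toNat_le_of_le_natCast <| by
      exact_mod_cast (pairwise_detectability_root_count_general hβ (by omega)).le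
  simp only [mul_eq_zero, sub_eq_zero]
  exact ⟨root_count, by gcongr⟩
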